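/- arXiv:math/0002164 — 2 statements merged into one kernel-verified Lean document; each statement's English description precedes it below -/
import Mathlib

section
/- Let ι be a finite type, f : ι → MvPolynomial ι ℂ, and let F : R → R be the unique ℂ-algebra homomorphism with F(t^a_0) = ĵ(f a) for all a and F ∘ ∂ = ∂ ∘ F. Set Ĵ_a^b := ĵ( pderiv a (f b) ) ∈ R (the Jacobian of f, prolonged to R). Then for every u ∈ R, every a ∈ ι and every k ∈ ℕ: ∂_{k,a}(F u) = ∑_{b ∈ ι} ∑_{ℓ ≥ k} (ℓ choose k) · ∂^{ℓ-k}(Ĵ_a^b) · F( ∂_{ℓ,b} u ), where the sum over ℓ has only finitely many nonzero terms since ∂_{ℓ,b} u = 0 for all large ℓ. -/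
open MvPolynomial

/-!
Since `u ↦ ∂_{k,a} (F u)` is a derivation along `F`, it is determined by its values on the jet
variables: `∂_{k,a} (F u) = ∑ F (∂_{ℓ,b} u) · ∂_{k,a} (F t^b_ℓ)`, where `F t^b_ℓ = ∂^ℓ (ĵ (f b))`.
The commutation relations `[∂_{0,a}, ∂] = 0` and `[∂_{k+1,a}, ∂] = ∂_{k,a}` give, by Pascal's rule,
`∂_{k,a} ∂^ℓ v = (ℓ choose k) ∂^{ℓ-k} ∂_{0,a} v` whenever `v` involves only the variables `t^b_0`.
-/

section ChainRule

variable {σ R : Type*} [CommSemiring R]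

theorem support_pderiv_subset_vars (u : MvPolynomial σ R) :
    (Function.support fun i => pderiv i u) ⊆ u.vars := fun _ hi =>
  not_imp_comm.1 pderiv_eq_zero_of_notMem_vars hi

theorem derivation_eq_finsum_pderiv_smul {M : Type*} [AddCommMonoid M] [Module R M]
    [Module (MvPolynomial σ R) M] [IsScalarTower R (MvPolynomial σ R) M]
    (d : Derivation R (MvPolynomial σ R) M) (u : MvPolynomial σ R) :
    d u = ∑ᶠ i, pderiv i u • d (X i) := by
  classical
  let e : Derivation R (MvPolynomial σ R) M :=
    ∑ i ∈ u.vars, (LinearMap.toSpanSingleton (MvPolynomial σ R) M (d (X i))).compDer (pderiv i)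
  have e_apply (v : MvPolynomial σ R) : e v = ∑ i ∈ u.vars, pderiv i v • d (X i) := by
    rw [← Derivation.coeFnAddMonoidHom_apply, map_sum, Finset.sum_apply]
    rfl
  have d_eq_e : d u = e u := derivation_eq_of_forall_mem_vars fun j hj => by
    simp [e_apply, Pi.single_apply, ite_smul, hj]
  have support_subset : (Function.support fun i => pderiv i u • d (X i)) ⊆ u.vars :=
    (Function.support_smul_subset_left _ _).trans (support_pderiv_subset_vars u)
  rw [d_eq_e, e_apply, finsum_eq_sum_of_support_subset _ support_subset]

theorem derivation_algHom_eq_finsum {A : Type*} [CommSemiring A] [Algebra R A]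
    (d : Derivation R A A) (φ : MvPolynomial σ R →ₐ[R] A) (u : MvPolynomial σ R) :
    d (φ u) = ∑ᶠ i, φ (pderiv i u) * d (φ (X i)) := by
  let := φ.toAlgebra
  have : IsScalarTower R (MvPolynomial σ R) A := .of_algHom φ
  exact derivation_eq_finsum_pderiv_smul (d.compAlgebraMap (MvPolynomial σ R)) u

end ChainRule

section TotalDerivative

variable {ι R : Type*} [CommRing R]
  {D : Derivation R (MvPolynomial (ι × ℕ) R) (MvPolynomial (ι × ℕ) R)}

theorem lie_pderiv_zero_totalDerivative (hD : ∀ a k, D (X (a, k)) = X (a, k + 1)) (a : ι) :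
    ⁅pderiv (R := R) (a, 0), D⁆ = 0 := by
  classical
  ext1 ⟨b, m⟩
  simp [Derivation.commutator_apply, hD, Pi.single_apply, apply_ite D]

theorem lie_pderiv_succ_totalDerivative (hD : ∀ a k, D (X (a, k)) = X (a, k + 1))
    (a : ι) (k : ℕ) : ⁅pderiv (R := R) (a, k + 1), D⁆ = pderiv (a, k) := by
  classical
  ext1 ⟨b, m⟩
  simp [Derivation.commutator_apply, hD, Pi.single_apply, apply_ite D]

theorem pderiv_zero_totalDerivative (hD : ∀ a k, D (X (a, k)) = X (a, k + 1)) (a : ι)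
    (v : MvPolynomial (ι × ℕ) R) : pderiv (a, 0) (D v) = D (pderiv (a, 0) v) :=
  sub_eq_zero.1 (DFunLike.congr_fun (lie_pderiv_zero_totalDerivative hD a) v)

theorem pderiv_succ_totalDerivative (hD : ∀ a k, D (X (a, k)) = X (a, k + 1)) (a : ι) (k : ℕ)
    (v : MvPolynomial (ι × ℕ) R) :
    pderiv (a, k + 1) (D v) = pderiv (a, k) v + D (pderiv (a, k + 1) v) :=
  sub_eq_iff_eq_add.1 (DFunLike.congr_fun (lie_pderiv_succ_totalDerivative hD a k) v)

theorem pderiv_iterate_totalDerivative (hD : ∀ a k, D (X (a, k)) = X (a, k + 1)) {a : ι}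
    {v : MvPolynomial (ι × ℕ) R} (hv : ∀ k, pderiv (a, k + 1) v = 0) (n k : ℕ) :
    pderiv (a, k) (D^[n] v) = n.choose k • D^[n - k] (pderiv (a, 0) v) := by
  induction n generalizing k with
  | zero => cases k <;> simp [hv]
  | succ n ih =>
    rw [Function.iterate_succ_apply']
    cases k with
    | zero =>
      rw [pderiv_zero_totalDerivative hD, ih]
      simp only [Nat.choose_zero_right, one_smul, Nat.sub_zero, Function.iterate_succ_apply']
    | succ k =>
      have pascal_term : n.choose (k + 1) • D (D^[n - (k + 1)] (pderiv (a, 0) v)) =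
          n.choose (k + 1) • D^[n - k] (pderiv (a, 0) v) := by
        rcases lt_or_ge n (k + 1) with hnk | hkn
        · simp [Nat.choose_eq_zero_of_lt hnk]
        · rw [← Function.iterate_succ_apply' D, Nat.succ_eq_add_one,
            show n - (k + 1) + 1 = n - k by lia]
      rw [pderiv_succ_totalDerivative hD, ih, ih, map_nsmul, pascal_term, ← add_smul,
        ← Nat.choose_succ_succ, Nat.add_sub_add_right]

theorem iterate_totalDerivative_X_zero (hD : ∀ a k, D (X (a, k)) = X (a, k + 1))
    (a : ι) (n : ℕ) : D^[n] (X (a, 0)) = X (a, n) := by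
  induction n with
  | zero => rfl
  | succ n ih => rw [Function.iterate_succ_apply', ih, hD]

theorem pderiv_succ_rename_prodMk_zero (g : MvPolynomial ι R) (a : ι) (k : ℕ) :
    pderiv (a, k + 1) (rename (fun a : ι => (a, 0)) g) = 0 := by
  classical
  refine pderiv_eq_zero_of_notMem_vars fun hmem => ?_
  simpa using vars_rename _ g hmem

theorem pderiv_iterate_totalDerivative_rename (hD : ∀ a k, D (X (a, k)) = X (a, k + 1))
    (g : MvPolynomial ι R) (a : ι) (n k : ℕ) :
    pderiv (a, k) (D^[n] (rename (fun a : ι => (a, 0)) g)) =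
      n.choose k • D^[n - k] (rename (fun a : ι => (a, 0)) (pderiv a g)) := by
  rw [pderiv_iterate_totalDerivative hD (pderiv_succ_rename_prodMk_zero g a),
    pderiv_rename (Prod.mk_left_injective 0)]

end TotalDerivative

theorem stmt_3_general {ι κ R : Type*} [CommRing R] (f : ι → MvPolynomial κ R)
    (D : Derivation R (MvPolynomial (ι × ℕ) R) (MvPolynomial (ι × ℕ) R))
    (hD : ∀ a k, D (X (a, k)) = X (a, k + 1))
    (E : Derivation R (MvPolynomial (κ × ℕ) R) (MvPolynomial (κ × ℕ) R))
    (hE : ∀ a k, E (X (a, k)) = X (a, k + 1))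
    (F : MvPolynomial (ι × ℕ) R →ₐ[R] MvPolynomial (κ × ℕ) R)
    (hF0 : ∀ b, F (X (b, 0)) = rename (fun a : κ => (a, 0)) (f b))
    (hFD : ∀ u, F (D u) = E (F u))
    (u : MvPolynomial (ι × ℕ) R) (a : κ) (k : ℕ) :
    pderiv (a, k) (F u) =
      ∑ᶠ (b : ι) (ℓ : ℕ), ℓ.choose k •
        (E^[ℓ - k] (rename (fun a : κ => (a, 0)) (pderiv a (f b))) * F (pderiv (b, ℓ) u)) := by
  have F_X (b : ι) (ℓ : ℕ) : F (X (b, ℓ)) = E^[ℓ] (rename (fun a : κ => (a, 0)) (f b)) := by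
    rw [← iterate_totalDerivative_X_zero hD, ← hF0]
    exact Function.Semiconj.iterate_right hFD ℓ (X (b, 0))
  have finite_support : Function.HasFiniteSupport fun i : ι × ℕ =>
      F (pderiv i u) * pderiv (a, k) (F (X i)) :=
    u.vars.finite_toSet.subset fun i hi =>
      support_pderiv_subset_vars u fun hzero => hi (by simp [hzero])
  rw [derivation_algHom_eq_finsum, finsum_curry _ finite_support]
  refine finsum_congr fun b => finsum_congr fun ℓ => ?_
  rw [F_X, pderiv_iterate_totalDerivative_rename hE, mul_smul_comm, mul_comm]

/-- The chain rule for partial derivatives of a prolonged map: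
`∂_{k,a}(F u) = ∑_b ∑_{ℓ} binom(ℓ,k) ∂^{ℓ-k}(Ĵ_a^b) · F(∂_{ℓ,b} u)`
(the binomial coefficient vanishes for `ℓ < k`, and the sum over `ℓ` has finite support). -/
theorem stmt_3 (ι : Type*) [Fintype ι] (f : ι → MvPolynomial ι ℂ)
    (D : Derivation ℂ (MvPolynomial (ι × ℕ) ℂ) (MvPolynomial (ι × ℕ) ℂ))
    (hD : ∀ (a : ι) (k : ℕ), D (X (a, k)) = X (a, k + 1))
    (F : MvPolynomial (ι × ℕ) ℂ →ₐ[ℂ] MvPolynomial (ι × ℕ) ℂ)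
    (hF0 : ∀ a : ι, F (X (a, 0)) = rename (fun a : ι => (a, 0)) (f a))
    (hFD : ∀ u : MvPolynomial (ι × ℕ) ℂ, F (D u) = D (F u))
    (u : MvPolynomial (ι × ℕ) ℂ) (a : ι) (k : ℕ) :
    pderiv (a, k) (F u) =
      ∑ b : ι, ∑ᶠ ℓ : ℕ, ℓ.choose k •
        ((⇑D)^[ℓ - k] (rename (fun a : ι => (a, 0)) (pderiv a (f b)))
          * F (pderiv (b, ℓ) u)) := by
  rw [stmt_3_general f D hD D hD F hF0 hFD, finsum_eq_sum_of_fintype]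
end

section
/- Let ι be a finite type. For all u, v ∈ R and every pair of indices a, b ∈ ι, one has ∑_{k,ℓ ≥ 0} ∂^{k+ℓ}( (δ_{k,a} u) · (δ_{ℓ,b} v) ) = ∑_{k,ℓ ≥ 0} ( ∂^ℓ( ∂_{k,a} u ) ) · ( ∂^k( ∂_{ℓ,b} v ) ), where all four sums have only finitely many nonzero terms (since δ_{k,a} u = 0, δ_{ℓ,b} v = 0, ∂_{k,a} u = 0 and ∂_{ℓ,b} v = 0 for all large k, ℓ). -/
open MvPolynomial

/-- The higher Euler operator `δ_{k,a} u = ∑_i (-1)^i binom(k+i,k) ∂^i(∂_{k+i,a} u)`. -/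
noncomputable def eulerOp {ι : Type*}
    (D : Derivation ℂ (MvPolynomial (ι × ℕ) ℂ) (MvPolynomial (ι × ℕ) ℂ))
    (k : ℕ) (a : ι) (u : MvPolynomial (ι × ℕ) ℂ) : MvPolynomial (ι × ℕ) ℂ :=
  ∑ᶠ i : ℕ, ((-1 : ℂ) ^ i * ((k + i).choose k : ℂ)) • (⇑D)^[i] (pderiv (a, k + i) u)

/-!
Write `δ_k f` for the Euler operators of a finitely supported sequence `f` in a commutative algebra
with a derivation `∂`. Iterating the Leibniz rule in the form `f · ∂h = ∂(f · h) - ∂f · h` gives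
integration by parts with remainder, `∑_k ∂^k(δ_k f · h) = ∑_m f_m · ∂^m h`. Apply this once with
`h = δ_ℓ g`; since `∂^m` commutes with `δ_ℓ`, it can be applied a second time, to the sequence
`∂^m g` with `h = f_m`.
-/

open Function Finset

section Finsum

variable {α β M : Type*}

theorem hasFiniteSupport_of_eq_zero_imp {N : Type*} [Zero M] [Zero N] {f : α → M} {g : α → N}
    (hf : HasFiniteSupport f) (hfg : ∀ a, f a = 0 → g a = 0) : HasFiniteSupport g :=
  hf.subset fun a ↦ mt (hfg a)

theorem hasFiniteSupport_uncurry {N P : Type*} [Zero M] [Zero N] [Zero P] {f : α → M} {g : β → N}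
    (hf : HasFiniteSupport f) (hg : HasFiniteSupport g) {F : α → β → P}
    (hfF : ∀ a b, f a = 0 → F a b = 0) (hgF : ∀ a b, g b = 0 → F a b = 0) :
    HasFiniteSupport (uncurry F) :=
  (hf.prod hg).subset fun p hp ↦ ⟨mt (hfF p.1 p.2) hp, mt (hgF p.1 p.2) hp⟩

theorem hasFiniteSupport_comp_add [AddMonoid α] [HasAntidiagonal α] [Zero M] {f : α → M}
    (hf : HasFiniteSupport f) : HasFiniteSupport fun p : α × α ↦ f (p.1 + p.2) :=
  (hf.biUnion fun m _ ↦ (antidiagonal m).finite_toSet).subset fun p hp ↦ by simpa using hp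

variable [AddCommMonoid M]

theorem finsum_comm_of_hasFiniteSupport {F : α → β → M} (hF : HasFiniteSupport (uncurry F)) :
    ∑ᶠ (a) (b), F a b = ∑ᶠ (b) (a), F a b := by
  have hF_swap : HasFiniteSupport fun p : β × α ↦ uncurry F p.swap :=
    hF.fun_comp_of_injective Prod.swap_injective
  calc ∑ᶠ (a) (b), F a b = ∑ᶠ p, uncurry F p := (finsum_curry _ hF).symm
    _ = ∑ᶠ p : β × α, uncurry F p.swap := (finsum_comp_equiv (Equiv.prodComm β α)).symm
    _ = ∑ᶠ (b) (a), F a b := finsum_curry _ hF_swap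

theorem finsum_finsum_eq_finsum_sum_antidiagonal [AddMonoid α] [HasAntidiagonal α] {F : α → α → M}
    (hF : HasFiniteSupport (uncurry F)) :
    ∑ᶠ (a) (b), F a b = ∑ᶠ m, ∑ p ∈ antidiagonal m, F p.1 p.2 := by
  classical
  set T : Finset α := hF.toFinset.image fun p ↦ p.1 + p.2
  have mem_T (p : α × α) (hp : F p.1 p.2 ≠ 0) : p.1 + p.2 ∈ T :=
    mem_image_of_mem (fun p : α × α ↦ p.1 + p.2) (hF.mem_toFinset.2 hp)
  calc ∑ᶠ (a) (b), F a b = ∑ᶠ p, uncurry F p := (finsum_curry _ hF).symm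
    _ = ∑ p ∈ T.biUnion antidiagonal, F p.1 p.2 :=
      finsum_eq_sum_of_support_subset _ fun p hp ↦ by simpa using mem_T p hp
    _ = ∑ m ∈ T, ∑ p ∈ antidiagonal m, F p.1 p.2 :=
      sum_biUnion fun m _ n _ hmn ↦ disjoint_left.2 fun p hm hn ↦
        hmn ((mem_antidiagonal.1 hm).symm.trans (mem_antidiagonal.1 hn))
    _ = ∑ᶠ m, ∑ p ∈ antidiagonal m, F p.1 p.2 := by
      refine (finsum_eq_sum_of_support_subset _ fun m hm ↦ ?_).symm
      obtain ⟨p, hp, hFp⟩ := exists_ne_zero_of_sum_ne_zero hm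
      exact mem_antidiagonal.1 hp ▸ mem_T p hFp

theorem iterate_map_finsum {G : Type*} [FunLike G M M] [AddMonoidHomClass G M M] (φ : G) (n : ℕ)
    {f : α → M} (hf : HasFiniteSupport f) : φ^[n] (∑ᶠ a, f a) = ∑ᶠ a, φ^[n] (f a) := by
  induction n with
  | zero => rfl
  | succ n ih =>
    simp only [iterate_succ_apply', ih]
    exact map_finsum φ (hf.fun_comp (iterate_map_zero φ n))

end Finsum

section HigherEuler

variable {R A : Type*} [CommRing R] [CommRing A] [Algebra R A] (D : Derivation R A A)

/-- The `k`-th higher Euler operator of a derivation `D`, applied to a sequence `f` that plays the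
role of the partial derivatives `m ↦ ∂u/∂t_m`. It is meaningful when `f` has finite support. -/
noncomputable def higherEuler (k : ℕ) (f : ℕ → A) : A :=
  ∑ᶠ i : ℕ, ((-1 : R) ^ i * ((k + i).choose k : R)) • D^[i] (f (k + i))

theorem iterate_derivation_smul (n : ℕ) (c : R) (x : A) : D^[n] (c • x) = c • D^[n] x :=
  Commute.iterate_left (g := (c • ·)) (D.map_smul c) n x

theorem sum_antidiagonal_choose_smul_iterate_mul (m : ℕ) (x y : A) :
    ∑ p ∈ antidiagonal m, ((-1 : R) ^ p.2 * (m.choose p.1 : R)) • D^[p.1] (D^[p.2] x * y) =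
      x * D^[m] y := by
  induction m generalizing x with
  | zero => simp
  | succ m ih =>
    have pascal := sum_antidiagonal_choose_succ_nsmul
      (fun i j ↦ (-1 : R) ^ j • D^[i] (D^[j] x * y)) m
    have regroup (c : R) (n : ℕ) (z : A) : (c * (n : R)) • z = n • c • z := by
      rw [mul_comm, mul_smul, Nat.cast_smul_eq_nsmul]
    have shift_right : ∑ p ∈ antidiagonal m,
        m.choose p.1 • (-1 : R) ^ (p.2 + 1) • D^[p.1] (D^[p.2 + 1] x * y) =
          -(D x * D^[m] y) := by
      rw [← ih (D x), ← sum_neg_distrib]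
      simp only [regroup, pow_succ, iterate_succ_apply, mul_neg_one, neg_smul, smul_neg]
    have shift_left : ∑ p ∈ antidiagonal m,
        m.choose p.2 • (-1 : R) ^ p.2 • D^[p.1 + 1] (D^[p.2] x * y) = D (x * D^[m] y) := by
      rw [← ih x, map_sum]
      refine sum_congr rfl fun p hp ↦ ?_
      rw [regroup, map_nsmul, D.map_smul, ← iterate_succ_apply' D,
        m.choose_symm_of_eq_add (mem_antidiagonal.1 hp).symm]
    simp only [regroup]
    rw [pascal, shift_right, shift_left, D.leibniz, iterate_succ_apply', smul_eq_mul, smul_eq_mul]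
    ring

variable {f g : ℕ → A}

theorem hasFiniteSupport_higherEuler (hf : HasFiniteSupport f) :
    HasFiniteSupport fun k ↦ higherEuler D k f := by
  refine ((hasFiniteSupport_comp_add hf).image Prod.fst).subset fun k hk ↦ ?_
  contrapose! hk
  have f_add_eq_zero (i : ℕ) : f (k + i) = 0 := by_contra fun hi ↦ hk ⟨(k, i), hi, rfl⟩
  simp [higherEuler, f_add_eq_zero]

theorem hasFiniteSupport_higherEuler_summand (hf : HasFiniteSupport f) (k : ℕ) :
    HasFiniteSupport fun i ↦ ((-1 : R) ^ i * ((k + i).choose k : R)) • D^[i] (f (k + i)) :=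
  hasFiniteSupport_of_eq_zero_imp (hf.fun_comp_of_injective (add_right_injective k)) fun i hi ↦ by
    rw [hi, iterate_map_zero, smul_zero]

theorem iterate_higherEuler (hf : HasFiniteSupport f) (n k : ℕ) :
    D^[n] (higherEuler D k f) = higherEuler D k fun m ↦ D^[n] (f m) := by
  rw [higherEuler, iterate_map_finsum D n (hasFiniteSupport_higherEuler_summand D hf k)]
  simp only [iterate_derivation_smul, Commute.iterate_iterate_self D n _ _]
  rfl

theorem finsum_iterate_higherEuler_mul (hf : HasFiniteSupport f) (h : A) :
    ∑ᶠ k, D^[k] (higherEuler D k f * h) = ∑ᶠ m, f m * D^[m] h := by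
  let F (k i : ℕ) : A :=
    ((-1 : R) ^ i * ((k + i).choose k : R)) • D^[k] (D^[i] (f (k + i)) * h)
  have expand (k : ℕ) : D^[k] (higherEuler D k f * h) = ∑ᶠ i, F k i := by
    have hk := hasFiniteSupport_higherEuler_summand D hf k
    rw [higherEuler, finsum_mul' _ _ hk,
      iterate_map_finsum D k (hk.fun_comp (g := (· * h)) (zero_mul h))]
    simp only [F, smul_mul_assoc, iterate_derivation_smul]
  have hF : HasFiniteSupport (uncurry F) :=
    hasFiniteSupport_of_eq_zero_imp (hasFiniteSupport_comp_add hf) fun p hp ↦ by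
      simp [uncurry, F, hp, iterate_map_zero]
  rw [finsum_congr expand, finsum_finsum_eq_finsum_sum_antidiagonal hF]
  refine finsum_congr fun m ↦ ?_
  rw [← sum_antidiagonal_choose_smul_iterate_mul D m (f m) h]
  refine sum_congr rfl fun p hp ↦ ?_
  simp only [F, mem_antidiagonal.1 hp]

theorem stmt_9_general (hf : HasFiniteSupport f) (hg : HasFiniteSupport g) :
    ∑ᶠ (k : ℕ) (ℓ : ℕ), D^[k + ℓ] (higherEuler D k f * higherEuler D ℓ g) =
      ∑ᶠ (k : ℕ) (ℓ : ℕ), D^[ℓ] (f k) * D^[k] (g ℓ) := by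
  have hδf := hasFiniteSupport_higherEuler D hf
  have hδg := hasFiniteSupport_higherEuler D hg
  have D_zero := iterate_map_zero D
  calc ∑ᶠ (k) (ℓ), D^[k + ℓ] (higherEuler D k f * higherEuler D ℓ g)
    _ = ∑ᶠ (ℓ) (k), D^[k + ℓ] (higherEuler D k f * higherEuler D ℓ g) :=
      finsum_comm_of_hasFiniteSupport <| hasFiniteSupport_uncurry hδf hδg
        (fun _ _ h ↦ by simp [h, D_zero]) (fun _ _ h ↦ by simp [h, D_zero])
    _ = ∑ᶠ ℓ, D^[ℓ] (∑ᶠ k, D^[k] (higherEuler D k f * higherEuler D ℓ g)) := by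
      refine finsum_congr fun ℓ ↦ ?_
      rw [iterate_map_finsum D ℓ (hasFiniteSupport_of_eq_zero_imp hδf fun k hk ↦ by
        rw [hk, zero_mul, D_zero])]
      simp only [← iterate_add_apply, add_comm ℓ]
    _ = ∑ᶠ ℓ, D^[ℓ] (∑ᶠ m, higherEuler D ℓ (fun j ↦ D^[m] (g j)) * f m) := by
      simp only [finsum_iterate_higherEuler_mul D hf, iterate_higherEuler D hg, mul_comm (f _)]
    _ = ∑ᶠ (ℓ) (m), D^[ℓ] (higherEuler D ℓ (fun j ↦ D^[m] (g j)) * f m) :=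
      finsum_congr fun ℓ ↦ iterate_map_finsum D ℓ (hf.mul_right _)
    _ = ∑ᶠ (m) (ℓ), D^[ℓ] (higherEuler D ℓ (fun j ↦ D^[m] (g j)) * f m) :=
      finsum_comm_of_hasFiniteSupport <| hasFiniteSupport_uncurry hδg hf
        (fun ℓ m h ↦ by simp [← iterate_higherEuler D hg, h, D_zero])
        (fun _ _ h ↦ by simp [h, D_zero])
    _ = ∑ᶠ (m) (ℓ), D^[ℓ] (f m) * D^[m] (g ℓ) := by
      refine finsum_congr fun m ↦ ?_
      rw [finsum_iterate_higherEuler_mul D (hg.fun_comp (D_zero m))]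
      simp only [mul_comm]

end HigherEuler

theorem hasFiniteSupport_pderiv {R σ τ : Type*} [CommSemiring R] {e : τ → σ} (he : Injective e)
    (u : MvPolynomial σ R) : HasFiniteSupport fun i ↦ pderiv (e i) u :=
  (u.vars.finite_toSet.preimage he.injOn).subset fun _ hi ↦
    by_contra fun hmem ↦ hi (pderiv_eq_zero_of_notMem_vars hmem)

theorem eulerOp_eq_higherEuler {ι : Type*}
    (D : Derivation ℂ (MvPolynomial (ι × ℕ) ℂ) (MvPolynomial (ι × ℕ) ℂ))
    (k : ℕ) (a : ι) (u : MvPolynomial (ι × ℕ) ℂ) :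
    eulerOp D k a u = higherEuler D k fun m ↦ pderiv (a, m) u :=
  rfl

/-- Soloviev's identity (Lemma 4.5, i.e. Soloviev's Statement 6.1.1), even constant-coefficient
form: `∑_{k,ℓ} ∂^{k+ℓ}(δ_{k,a}u · δ_{ℓ,b}v) = ∑_{k,ℓ} ∂^ℓ(∂_{k,a}u) · ∂^k(∂_{ℓ,b}v)`. -/
theorem stmt_9 (ι : Type*) [Fintype ι]
    (D : Derivation ℂ (MvPolynomial (ι × ℕ) ℂ) (MvPolynomial (ι × ℕ) ℂ))
    (hD : ∀ (a : ι) (k : ℕ), D (X (a, k)) = X (a, k + 1))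
    (u v : MvPolynomial (ι × ℕ) ℂ) (a b : ι) :
    (∑ᶠ (k : ℕ) (ℓ : ℕ), (⇑D)^[k + ℓ] (eulerOp D k a u * eulerOp D ℓ b v)) =
      ∑ᶠ (k : ℕ) (ℓ : ℕ), (⇑D)^[ℓ] (pderiv (a, k) u) * (⇑D)^[k] (pderiv (b, ℓ) v) := by
  simpa only [eulerOp_eq_higherEuler] using
    stmt_9_general D (hasFiniteSupport_pderiv (Prod.mk_right_injective a) u)
      (hasFiniteSupport_pderiv (Prod.mk_right_injective b) v)
end
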